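/- Let (X, T) be a dynamical system and λ ∈ (0,1]. Then (X, T) is topologically mixing if and only if (K(X), T_K) is topologically mixing, if and only if (𝔽^{=λ}(X), T_F|_{𝔽^{=λ}(X)}) is topologically mixing. -/

import Mathlib

open Metric Set TopologicalSpace Filter Function
open scoped Classical

variable {X Y : Type*}

/-- Extended Hausdorff metric on subsets of `X`: the usual Hausdorff distance between
two nonempty sets (or two empty sets), and `diam X` when exactly one of them is empty. -/
noncomputable def eHd (X : Type*) [MetricSpace X] (A B : Set X) : ℝ :=
  if (A.Nonempty ∧ B.Nonempty) ∨ (A = ∅ ∧ B = ∅) then Metric.hausdorffDist A B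
  else Metric.diam (Set.univ : Set X)

/-- The `α`-cut of a fuzzy set. -/
def cut (A : X → ℝ) (α : ℝ) : Set X := {x | α ≤ A x}

/-- The levelwise metric `d_∞` on fuzzy sets. -/
noncomputable def dinf [MetricSpace X] (A B : X → ℝ) : ℝ :=
  sSup {r : ℝ | ∃ α ∈ Set.Ioc (0:ℝ) 1, r = eHd X (cut A α) (cut B α)}

/-- A fuzzy set: an upper semicontinuous function into `[0,1]`. -/
def IsFuzzy [TopologicalSpace X] (A : X → ℝ) : Prop :=
  (∀ x, A x ∈ Set.Icc (0:ℝ) 1) ∧ UpperSemicontinuous A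

/-- `𝔽₀(X)`: nonempty (not identically zero) u.s.c. fuzzy sets. -/
def F0 (X : Type*) [TopologicalSpace X] : Set (X → ℝ) :=
  {A | IsFuzzy A ∧ ∃ x, A x ≠ 0}

/-- `𝔽^{=λ}(X)`: u.s.c. fuzzy sets with maximum value `λ`. -/
def Feq (X : Type*) [TopologicalSpace X] (lam : ℝ) : Set (X → ℝ) :=
  {A | IsFuzzy A ∧ (∃ x, A x = lam) ∧ ∀ x, A x ≤ lam}

/-- `𝔽^{≥λ}(X)`: u.s.c. fuzzy sets attaining a value `≥ λ`. -/
def Fge (X : Type*) [TopologicalSpace X] (lam : ℝ) : Set (X → ℝ) :=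
  {A | IsFuzzy A ∧ ∃ x, lam ≤ A x}

/-- Zadeh's extension of `T`. -/
noncomputable def zadeh (T : X → X) (A : X → ℝ) : X → ℝ :=
  fun x => sSup (A '' (T ⁻¹' {x}))

/-- The induced map `T_K` on the hyperspace of nonempty closed (= compact) subsets. -/
def hyper [TopologicalSpace X] (T : X → X) (hT : Continuous T)
    (A : NonemptyCompacts X) : NonemptyCompacts X :=
  ⟨⟨T '' A, A.isCompact.image hT⟩, A.nonempty.image T⟩

/-- Topological transitivity. -/
def TopTrans [TopologicalSpace Y] (S : Y → Y) : Prop :=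
  ∀ U V : Set Y, IsOpen U → IsOpen V → U.Nonempty → V.Nonempty →
    ∃ n : ℕ, (S^[n] '' U ∩ V).Nonempty

/-- Weak mixing: `S × S` is transitive. -/
def TopWeakMix [TopologicalSpace Y] (S : Y → Y) : Prop :=
  TopTrans (fun p : Y × Y => (S p.1, S p.2))

/-- Topological transitivity of `S` restricted to `C`, for the topology induced by the
(pseudo)metric `ρ`, phrased via metric balls. -/
def TransOn (ρ : Y → Y → ℝ) (S : Y → Y) (C : Set Y) : Prop :=
  ∀ A ∈ C, ∀ B ∈ C, ∀ ε > 0, ∃ n : ℕ, ∃ E ∈ C, ρ E A < ε ∧ ρ (S^[n] E) B < ε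

/-- Weak mixing of `S` restricted to `C`, phrased via metric balls. -/
def WeakMixOn (ρ : Y → Y → ℝ) (S : Y → Y) (C : Set Y) : Prop :=
  ∀ A₁ ∈ C, ∀ A₂ ∈ C, ∀ B₁ ∈ C, ∀ B₂ ∈ C, ∀ ε > 0, ∃ n : ℕ,
    ∃ E₁ ∈ C, ∃ E₂ ∈ C, ρ E₁ A₁ < ε ∧ ρ E₂ A₂ < ε ∧
      ρ (S^[n] E₁) B₁ < ε ∧ ρ (S^[n] E₂) B₂ < ε


/-- Topological mixing: every return-time set `N(U,V)` is cofinite. -/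
def TopMix [TopologicalSpace Y] (S : Y → Y) : Prop :=
  ∀ U V : Set Y, IsOpen U → IsOpen V → U.Nonempty → V.Nonempty →
    ∃ m : ℕ, ∀ n ≥ m, (S^[n] '' U ∩ V).Nonempty

/-- Topological mixing of `S` restricted to `C`, phrased via metric balls. -/
def MixOn (ρ : Y → Y → ℝ) (S : Y → Y) (C : Set Y) : Prop :=
  ∀ A ∈ C, ∀ B ∈ C, ∀ ε > 0, ∃ m : ℕ, ∀ n ≥ m,
    ∃ E ∈ C, ρ E A < ε ∧ ρ (S^[n] E) B < ε

/-!
If finitely many pairs `(a, b)` have points `P (a, b)` near `a` with `T^[n] (P (a, b))` near `b`,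
then giving `P (a, b)` the weight `min (A a) (B b)` defines a fuzzy set close to `A` whose `n`-th
image is close to `B`, as soon as the points `a` and `b` are maximum points of `A` and `B` on the
balls of fine enough covers: the pairs whose second entry maximises `B` globally recover `A`, and
symmetrically. So mixing of `T` passes to `𝔽^{=λ}(X)`. From there it passes to `K(X)`, because
`K ↦ λ · 1_K` maps `K(X)` into `𝔽^{=λ}(X)`, with a `1`-Lipschitz left inverse, the `λ`-cut, that
commutes with the dynamics. Finally, for `U` open in `X` the compacta contained in `U` form an open
subset of `K(X)`, which brings mixing back to `X`.
-/

section Dynamics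

variable {T : X → X}

lemma TopMix.exists_forall_ge_of_finite [TopologicalSpace X] (h : TopMix T) {ι : Type*} [Finite ι]
    {U V : ι → Set X} (hU : ∀ i, IsOpen (U i)) (hV : ∀ i, IsOpen (V i))
    (hU' : ∀ i, (U i).Nonempty) (hV' : ∀ i, (V i).Nonempty) :
    ∃ m : ℕ, ∀ n ≥ m, ∀ i, (T^[n] '' U i ∩ V i).Nonempty :=
  eventually_atTop.1 <| eventually_all.2 fun i =>
    eventually_atTop.2 <| h (U i) (V i) (hU i) (hV i) (hU' i) (hV' i)

lemma TopMix.exists_forall_ge_dist_lt [PseudoMetricSpace X] (h : TopMix T) {ι : Type*} [Finite ι]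
    (a b : ι → X) {δ : ℝ} (hδ : 0 < δ) :
    ∃ m : ℕ, ∀ n ≥ m, ∀ i, ∃ x, dist x (a i) < δ ∧ dist (T^[n] x) (b i) < δ := by
  obtain ⟨m, hm⟩ := h.exists_forall_ge_of_finite
    (fun i => isOpen_ball (x := a i) (ε := δ)) (fun i => isOpen_ball (x := b i) (ε := δ))
    (fun _ => nonempty_ball.2 hδ) (fun _ => nonempty_ball.2 hδ)
  refine ⟨m, fun n hn i => ?_⟩
  obtain ⟨_, ⟨x, hxa, rfl⟩, hxb⟩ := hm n hn i
  exact ⟨x, hxa, hxb⟩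

lemma MixOn.topMix [PseudoMetricSpace X] (h : MixOn dist T univ) : TopMix T := by
  rintro U V hU hV ⟨a, ha⟩ ⟨b, hb⟩
  obtain ⟨ε, hε, hεU⟩ := Metric.isOpen_iff.1 hU a ha
  obtain ⟨η, hη, hηV⟩ := Metric.isOpen_iff.1 hV b hb
  obtain ⟨m, hm⟩ := h a (mem_univ a) b (mem_univ b) (min ε η) (lt_min hε hη)
  refine ⟨m, fun n hn => ?_⟩
  obtain ⟨x, -, hxa, hxb⟩ := hm n hn
  exact ⟨T^[n] x, mem_image_of_mem _ (hεU (hxa.trans_le (min_le_left ε η))),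
    hηV (hxb.trans_le (min_le_right ε η))⟩

lemma coe_iterate_hyper [TopologicalSpace X] (hT : Continuous T) (n : ℕ) (K : NonemptyCompacts X) :
    ((hyper T hT)^[n] K : Set X) = T^[n] '' K := by
  induction n with
  | zero => simp
  | succ n ih =>
    rw [iterate_succ_apply', iterate_succ', image_comp, ← ih]
    rfl

theorem TopMix.of_hyper [TopologicalSpace X] (hT : Continuous T) (h : TopMix (hyper T hT)) :
    TopMix T := by
  rintro U V hU hV ⟨u, hu⟩ ⟨v, hv⟩
  obtain ⟨m, hm⟩ := h {K | ↑K ⊆ U} {K | ↑K ⊆ V} (NonemptyCompacts.isOpen_subsets_of_isOpen hU)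
    (NonemptyCompacts.isOpen_subsets_of_isOpen hV) ⟨{u}, by simpa⟩ ⟨{v}, by simpa⟩
  refine ⟨m, fun n hn => ?_⟩
  obtain ⟨_, ⟨K, hKU, rfl⟩, hKV⟩ := hm n hn
  obtain ⟨x, hx⟩ := K.nonempty
  rw [mem_ofPred_eq, coe_iterate_hyper] at hKV
  exact ⟨T^[n] x, mem_image_of_mem _ (hKU hx), hKV (mem_image_of_mem _ hx)⟩

end Dynamics

section LevelwiseMetric

variable [MetricSpace X]

lemma eHd_of_nonempty {K L : Set X} (hK : K.Nonempty) (hL : L.Nonempty) :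
    eHd X K L = hausdorffDist K L :=
  if_pos (Or.inl ⟨hK, hL⟩)

lemma eHd_le_of_mem_dist {K L : Set X} {δ : ℝ} (hδ : 0 ≤ δ)
    (hKL : ∀ x ∈ K, ∃ y ∈ L, dist x y ≤ δ) (hLK : ∀ y ∈ L, ∃ x ∈ K, dist y x ≤ δ) :
    eHd X K L ≤ δ := by
  have hne : K.Nonempty ↔ L.Nonempty :=
    ⟨fun ⟨x, hx⟩ => (hKL x hx).imp fun _ => And.left,
      fun ⟨y, hy⟩ => (hLK y hy).imp fun _ => And.left⟩
  rw [eHd, if_pos]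
  · exact hausdorffDist_le_of_mem_dist hδ hKL hLK
  · simp only [← not_nonempty_iff_eq_empty]
    tauto

lemma eHd_le_diam [BoundedSpace X] (K L : Set X) : eHd X K L ≤ diam (univ : Set X) := by
  have hdist (x y : X) : dist x y ≤ diam (univ : Set X) :=
    dist_le_diam_of_mem (Bornology.IsBounded.all univ) (mem_univ x) (mem_univ y)
  by_cases hKL : K.Nonempty ∧ L.Nonempty
  · obtain ⟨⟨a, ha⟩, ⟨b, hb⟩⟩ := hKL
    exact eHd_le_of_mem_dist diam_nonneg (fun x _ => ⟨b, hb, hdist x b⟩)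
      fun y _ => ⟨a, ha, hdist y a⟩
  · rw [eHd]
    split_ifs with h
    · obtain ⟨rfl, rfl⟩ := h.resolve_left hKL
      exact hausdorffDist_empty.trans_le diam_nonneg
    · exact le_rfl

lemma hausdorffDist_cut_le_dinf [BoundedSpace X] {A B : X → ℝ} {α : ℝ} (hα : α ∈ Ioc (0 : ℝ) 1)
    (hA : (cut A α).Nonempty) (hB : (cut B α).Nonempty) :
    hausdorffDist (cut A α) (cut B α) ≤ dinf A B := by
  rw [← eHd_of_nonempty hA hB]
  refine le_csSup ⟨diam (univ : Set X), ?_⟩ ⟨α, hα, rfl⟩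
  rintro _ ⟨β, -, rfl⟩
  exact eHd_le_diam _ _

end LevelwiseMetric

section FuzzySets

lemma cut_indicator {lam : ℝ} (hlam : 0 < lam) (K : Set X) :
    cut (K.indicator fun _ => lam) lam = K := by
  ext x
  by_cases hx : x ∈ K <;> simp [cut, hx, hlam]

variable [TopologicalSpace X] [TopologicalSpace Y] {A : X → ℝ} {B : Y → ℝ} {lam : ℝ}

lemma IsFuzzy.nonneg (hA : IsFuzzy A) : 0 ≤ A :=
  fun x => (hA.1 x).1

lemma IsFuzzy.bddAbove_range (hA : IsFuzzy A) : BddAbove (range A) :=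
  ⟨1, forall_mem_range.2 fun x => (hA.1 x).2⟩

lemma IsFuzzy.isClosed_cut (hA : IsFuzzy A) (α : ℝ) : IsClosed (cut A α) :=
  hA.2.isClosed_preimage α

lemma upperSemicontinuous_of_isClosed_cut (hA : 0 ≤ A) (hcut : ∀ α > 0, IsClosed (cut A α)) :
    UpperSemicontinuous A := by
  refine upperSemicontinuous_iff_isClosed_preimage.2 fun α => ?_
  rcases lt_or_ge 0 α with hα | hα
  · exact hcut α hα
  · rw [show A ⁻¹' Ici α = univ from eq_univ_of_forall fun x => hα.trans (hA x)]
    exact isClosed_univ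

lemma comp_mem_Feq (hA : A ∈ Feq X lam) {f : Y → X} (hf : Continuous f)
    (hmax : ∃ y, A (f y) = lam) : A ∘ f ∈ Feq Y lam :=
  ⟨⟨fun y => hA.1.1 (f y), hA.1.2.comp hf⟩, hmax, fun y => hA.2.2 (f y)⟩

lemma indicator_mem_Feq (hlam : lam ∈ Icc (0 : ℝ) 1) {K : Set X} (hK : IsClosed K)
    (hne : K.Nonempty) : K.indicator (fun _ => lam) ∈ Feq X lam := by
  have hle (x : X) : K.indicator (fun _ => lam) x ≤ lam :=
    indicator_le_self' (fun _ _ => hlam.1) x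
  refine ⟨⟨fun x => ⟨indicator_nonneg (fun _ _ => hlam.1) x, (hle x).trans hlam.2⟩,
    hK.upperSemicontinuous_indicator hlam.1⟩, ?_, hle⟩
  obtain ⟨x, hx⟩ := hne
  exact ⟨x, indicator_of_mem hx _⟩

end FuzzySets

section FuzzyProd

/-- The Cartesian product of two fuzzy sets. -/
def fuzzyProd (A : X → ℝ) (B : Y → ℝ) : X × Y → ℝ :=
  fun p => min (A p.1) (B p.2)

variable [TopologicalSpace X] [TopologicalSpace Y] {A : X → ℝ} {B : Y → ℝ} {lam : ℝ}

lemma exists_forall_fuzzyProd_eq_fst (hA : A ∈ Feq X lam) (hB : B ∈ Feq Y lam) :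
    ∃ y, ∀ x, fuzzyProd A B (x, y) = A x := by
  obtain ⟨y, hy⟩ := hB.2.1
  exact ⟨y, fun x => min_eq_left ((hA.2.2 x).trans hy.ge)⟩

lemma exists_forall_fuzzyProd_eq_snd (hA : A ∈ Feq X lam) (hB : B ∈ Feq Y lam) :
    ∃ x, ∀ y, fuzzyProd A B (x, y) = B y := by
  obtain ⟨x, hx⟩ := hA.2.1
  exact ⟨x, fun y => min_eq_right ((hB.2.2 y).trans hx.ge)⟩

lemma isFuzzy_fuzzyProd (hA : IsFuzzy A) (hB : IsFuzzy B) : IsFuzzy (fuzzyProd A B) :=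
  ⟨fun p => ⟨le_min (hA.nonneg p.1) (hB.nonneg p.2), (min_le_left _ _).trans (hA.1 p.1).2⟩,
    (hA.2.comp continuous_fst).inf (hB.2.comp continuous_snd)⟩

lemma fuzzyProd_mem_Feq (hA : A ∈ Feq X lam) (hB : B ∈ Feq Y lam) :
    fuzzyProd A B ∈ Feq (X × Y) lam := by
  obtain ⟨x, hx⟩ := hA.2.1
  obtain ⟨y, hy⟩ := exists_forall_fuzzyProd_eq_fst hA hB
  exact ⟨isFuzzy_fuzzyProd hA.1 hB.1, ⟨(x, y), (hy x).trans hx⟩,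
    fun p => (min_le_left _ _).trans (hA.2.2 p.1)⟩

end FuzzyProd

section ZadehExt

/-- Zadeh's extension of a map between possibly different spaces; `zadeh T` is `zadehExt T` by
definition. For a finite index space `Y` it is the fuzzy set with weight `A y` at each point `f y`.
Outside the range of `f` it vanishes, since `sSup ∅ = 0`. -/
noncomputable def zadehExt (f : Y → X) (A : Y → ℝ) : X → ℝ :=
  fun x => sSup (A '' (f ⁻¹' {x}))

variable {f : Y → X} {A : Y → ℝ} {lam : ℝ}

lemma zadehExt_nonneg (hA : 0 ≤ A) : 0 ≤ zadehExt f A :=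
  fun _ => Real.sSup_nonneg <| forall_mem_image.2 fun y _ => hA y

lemma le_zadehExt_apply (hA : BddAbove (range A)) (y : Y) : A y ≤ zadehExt f A (f y) :=
  le_csSup (hA.mono (image_subset_range _ _)) (mem_image_of_mem A rfl)

lemma zadehExt_le {c : ℝ} (hc : 0 ≤ c) {x : X} (h : ∀ y, f y = x → A y ≤ c) :
    zadehExt f A x ≤ c :=
  Real.sSup_le (forall_mem_image.2 h) hc

lemma bddAbove_range_zadehExt (hA : BddAbove (range A)) : BddAbove (range (zadehExt f A)) := by
  obtain ⟨c, hc⟩ := hA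
  exact ⟨max c 0, forall_mem_range.2 fun x => zadehExt_le (le_max_right c 0) fun y _ =>
    (hc (mem_range_self y)).trans (le_max_left c 0)⟩

lemma zadehExt_zadehExt {Z : Type*} (g : X → Z) (hA : 0 ≤ A) (hA' : BddAbove (range A)) :
    zadehExt g (zadehExt f A) = zadehExt (g ∘ f) A := by
  ext z
  have hnonneg : 0 ≤ zadehExt (g ∘ f) A z := zadehExt_nonneg hA z
  apply le_antisymm
  · refine zadehExt_le hnonneg fun x hx => ?_
    refine zadehExt_le hnonneg fun y hy => ?_
    obtain rfl : (g ∘ f) y = z := (congrArg g hy).trans hx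
    exact le_zadehExt_apply hA' y
  · refine zadehExt_le (zadehExt_nonneg (zadehExt_nonneg hA) z) ?_
    rintro y rfl
    exact (le_zadehExt_apply hA' y).trans
      (le_zadehExt_apply (bddAbove_range_zadehExt hA') (f y))

lemma iterate_zadeh (T : Y → Y) (hA : 0 ≤ A) (hA' : BddAbove (range A)) (n : ℕ) :
    (zadeh T)^[n] A = zadehExt T^[n] A := by
  induction n with
  | zero =>
    ext y
    simp [zadehExt]
  | succ n ih =>
    rw [iterate_succ_apply', iterate_succ', ih, ← zadehExt_zadehExt T hA hA']
    rfl

lemma cut_zadehExt [TopologicalSpace X] [T1Space X] [TopologicalSpace Y] [CompactSpace Y]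
    (hf : Continuous f) (hA : IsFuzzy A) {α : ℝ} (hα : 0 < α) :
    cut (zadehExt f A) α = f '' cut A α := by
  apply Subset.antisymm
  · intro x (hx : α ≤ zadehExt f A x)
    have hfiber : (f ⁻¹' {x}).Nonempty := by
      by_contra! hempty
      simp only [zadehExt, hempty, image_empty, Real.sSup_empty] at hx
      exact hx.not_gt hα
    obtain ⟨y, rfl, hmax⟩ := UpperSemicontinuousOn.exists_isMaxOn hfiber
      (isClosed_singleton.preimage hf).isCompact (hA.2.upperSemicontinuousOn _)
    exact mem_image_of_mem f (hx.trans (zadehExt_le (hA.nonneg y) hmax))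
  · rintro _ ⟨y, hy, rfl⟩
    exact le_trans hy (le_zadehExt_apply hA.bddAbove_range y)

lemma isFuzzy_zadehExt [TopologicalSpace X] [T2Space X] [TopologicalSpace Y] [CompactSpace Y]
    (hf : Continuous f) (hA : IsFuzzy A) : IsFuzzy (zadehExt f A) := by
  have hnonneg : 0 ≤ zadehExt f A := zadehExt_nonneg hA.nonneg
  refine ⟨fun x => ⟨hnonneg x, zadehExt_le zero_le_one fun y _ => (hA.1 y).2⟩,
    upperSemicontinuous_of_isClosed_cut hnonneg fun α hα => ?_⟩
  rw [cut_zadehExt hf hA hα]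
  exact ((hA.isClosed_cut α).isCompact.image hf).isClosed

lemma zadehExt_mem_Feq [TopologicalSpace X] [T2Space X] [TopologicalSpace Y] [CompactSpace Y]
    (hf : Continuous f) (hA : A ∈ Feq Y lam) : zadehExt f A ∈ Feq X lam := by
  obtain ⟨hfuzzy, ⟨y, rfl⟩, hle⟩ := hA
  have hle' (x : X) : zadehExt f A x ≤ A y := zadehExt_le (hfuzzy.nonneg y) fun z _ => hle z
  exact ⟨isFuzzy_zadehExt hf hfuzzy,
    ⟨f y, (hle' (f y)).antisymm (le_zadehExt_apply hfuzzy.bddAbove_range y)⟩, hle'⟩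

lemma dinf_zadehExt_le [MetricSpace X] [TopologicalSpace Y] [CompactSpace Y] (hf : Continuous f)
    (hA : IsFuzzy A) {B : X → ℝ} {c : Y → X} {δ η : ℝ} (hδ : 0 ≤ δ) (hη : 0 ≤ η)
    (hfc : ∀ y, dist (f y) (c y) ≤ δ) (hle : ∀ y, A y ≤ B (c y))
    (hcover : ∀ x, ∃ y, dist x (c y) ≤ η ∧ B x ≤ A y) :
    dinf (zadehExt f A) B ≤ η + δ := by
  refine Real.sSup_le ?_ (add_nonneg hη hδ)
  rintro _ ⟨α, ⟨hα, -⟩, rfl⟩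
  rw [cut_zadehExt hf hA hα]
  refine eHd_le_of_mem_dist (add_nonneg hη hδ) (forall_mem_image.2 fun y hy => ?_) fun x hx => ?_
  · exact ⟨c y, le_trans hy (hle y), (hfc y).trans (le_add_of_nonneg_left hη)⟩
  · obtain ⟨y, hxy, hBA⟩ := hcover x
    refine ⟨f y, mem_image_of_mem f (le_trans hx hBA), ?_⟩
    calc dist x (f y) ≤ dist x (c y) + dist (c y) (f y) := dist_triangle _ _ _
      _ ≤ η + δ := add_le_add hxy ((dist_comm _ _).trans_le (hfc y))

end ZadehExt

section FiniteApproximation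

variable [PseudoMetricSpace X] [CompactSpace X]

lemma exists_finset_forall_dist_le_and_le {β : Type*} [LinearOrder β] {f : X → β}
    (hf : UpperSemicontinuous f) {δ : ℝ} (hδ : 0 < δ) :
    ∃ s : Finset X, ∀ x : X, ∃ a : s, dist x a ≤ δ ∧ f x ≤ f a := by
  obtain ⟨t, -, ht⟩ := isCompact_univ.elim_nhds_subcover (fun c : X => closedBall c (δ / 2))
    fun c _ => closedBall_mem_nhds c (half_pos hδ)
  have hmax (c : X) : ∃ a ∈ closedBall c (δ / 2), IsMaxOn f (closedBall c (δ / 2)) a :=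
    (hf.upperSemicontinuousOn _).exists_isMaxOn ⟨c, mem_closedBall_self (half_pos hδ).le⟩
      (isCompact_closedBall c _)
  choose a ha hmax using hmax
  refine ⟨t.image a, fun x => ?_⟩
  obtain ⟨c, hc, hxc⟩ := mem_iUnion₂.1 (ht (mem_univ x))
  refine ⟨⟨a c, Finset.mem_image_of_mem a hc⟩, ?_, hmax c hxc⟩
  calc dist x (a c) ≤ dist x c + dist (a c) c := dist_triangle_right _ _ _
    _ ≤ δ / 2 + δ / 2 := add_le_add hxc (ha c)
    _ = δ := add_halves δ

lemma exists_finset_comp_mem_Feq {A : X → ℝ} {lam : ℝ} (hA : A ∈ Feq X lam) {δ : ℝ}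
    (hδ : 0 < δ) :
    ∃ s : Finset X, A ∘ (↑) ∈ Feq s lam ∧ ∀ x : X, ∃ a : s, dist x a ≤ δ ∧ A x ≤ A a := by
  obtain ⟨s, hs⟩ := exists_finset_forall_dist_le_and_le hA.1.2 hδ
  refine ⟨s, comp_mem_Feq hA continuous_subtype_val ?_, hs⟩
  obtain ⟨x, rfl⟩ := hA.2.1
  obtain ⟨a, -, hxa⟩ := hs x
  exact ⟨a, (hA.2.2 a).antisymm hxa⟩

end FiniteApproximation

section Mixing

variable [MetricSpace X] [CompactSpace X] {T : X → X} {lam : ℝ}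

theorem TopMix.mixOn_zadeh (h : TopMix T) : MixOn dinf (zadeh T) (Feq X lam) := by
  intro A hA B hB ε hε
  have hδ : 0 < ε / 3 := by positivity
  have hδε : ε / 3 + ε / 3 < ε := by linarith
  obtain ⟨s, hAs, hs⟩ := exists_finset_comp_mem_Feq hA hδ
  obtain ⟨r, hBr, hr⟩ := exists_finset_comp_mem_Feq hB hδ
  obtain ⟨m, hm⟩ := h.exists_forall_ge_dist_lt (ι := s × r) (fun i => i.1) (fun i => i.2) hδ
  refine ⟨m, fun n hn => ?_⟩
  choose P hPs hPr using hm n hn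
  let w : s × r → ℝ := fuzzyProd (A ∘ (↑)) (B ∘ (↑))
  have hw : w ∈ Feq (s × r) lam := fuzzyProd_mem_Feq hAs hBr
  refine ⟨zadehExt P w, zadehExt_mem_Feq continuous_of_discreteTopology hw, ?_, ?_⟩
  · obtain ⟨b, hb⟩ := exists_forall_fuzzyProd_eq_fst hAs hBr
    refine (dinf_zadehExt_le continuous_of_discreteTopology hw.1 hδ.le hδ.le
      (fun i => (hPs i).le) (fun i => min_le_left _ _) fun x => ?_).trans_lt hδε
    obtain ⟨a, hxa, hle⟩ := hs x
    exact ⟨(a, b), hxa, hle.trans (hb a).ge⟩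
  · have hE := bddAbove_range_zadehExt (f := P) hw.1.bddAbove_range
    rw [iterate_zadeh T (zadehExt_nonneg hw.1.nonneg) hE,
      zadehExt_zadehExt _ hw.1.nonneg hw.1.bddAbove_range]
    obtain ⟨a, ha⟩ := exists_forall_fuzzyProd_eq_snd hAs hBr
    refine (dinf_zadehExt_le continuous_of_discreteTopology hw.1 hδ.le hδ.le
      (fun i => (hPr i).le) (fun i => min_le_right _ _) fun x => ?_).trans_lt hδε
    obtain ⟨b, hxb, hle⟩ := hr x
    exact ⟨(a, b), hxb, hle.trans (ha b).ge⟩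

theorem TopMix.hyper_of_mixOn_zadeh (hT : Continuous T) (hlam : lam ∈ Ioc (0 : ℝ) 1)
    (h : MixOn dinf (zadeh T) (Feq X lam)) : TopMix (hyper T hT) := by
  refine MixOn.topMix fun K _ L _ ε hε => ?_
  have hmem (K : NonemptyCompacts X) : (K : Set X).indicator (fun _ => lam) ∈ Feq X lam :=
    indicator_mem_Feq (Ioc_subset_Icc_self hlam) K.isCompact.isClosed K.nonempty
  have hdist {F : X → ℝ} {K J : NonemptyCompacts X} (hJ : cut F lam = J)
      (hF : dinf F ((K : Set X).indicator fun _ => lam) < ε) : dist J K < ε := by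
    have hcut := cut_indicator hlam.1 (K : Set X)
    have hle := hausdorffDist_cut_le_dinf hlam (hJ ▸ J.nonempty) (hcut.symm ▸ K.nonempty)
    rw [hJ, hcut] at hle
    exact hle.trans_lt hF
  obtain ⟨m, hm⟩ := h _ (hmem K) _ (hmem L) ε hε
  refine ⟨m, fun n hn => ?_⟩
  obtain ⟨E, ⟨hE, ⟨x, hx⟩, -⟩, hEK, hEL⟩ := hm n hn
  let J : NonemptyCompacts X := ⟨⟨cut E lam, (hE.isClosed_cut lam).isCompact⟩, ⟨x, hx.ge⟩⟩
  refine ⟨J, mem_univ J, hdist rfl hEK, hdist ?_ hEL⟩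
  rw [iterate_zadeh T hE.nonneg hE.bddAbove_range, cut_zadehExt (hT.iterate n) hE hlam.1,
    coe_iterate_hyper]
  rfl

end Mixing

theorem mixing_iff_hyper_iff_zadeh_general [MetricSpace X] [CompactSpace X] (T : X → X)
    (hT : Continuous T) (lam : ℝ) (hlam : lam ∈ Ioc (0 : ℝ) 1) :
    List.TFAE [TopMix T, TopMix (hyper T hT), MixOn dinf (zadeh T) (Feq X lam)] := by
  tfae_have 1 → 3 := TopMix.mixOn_zadeh
  tfae_have 3 → 2 := TopMix.hyper_of_mixOn_zadeh hT hlam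
  tfae_have 2 → 1 := TopMix.of_hyper hT
  tfae_finish

/-- `(X,T)` is topologically mixing iff `(K(X), T_K)` is topologically mixing iff the
Zadeh extension on `𝔽^{=λ}(X)` is topologically mixing. -/
theorem mixing_iff_hyper_iff_zadeh {X : Type*} [MetricSpace X] [CompactSpace X] [Nontrivial X]
    (T : X → X) (hT : Continuous T) (hTs : Function.Surjective T)
    (lam : ℝ) (hlam : lam ∈ Set.Ioc (0:ℝ) 1) :
    (TopMix T ↔ TopMix (hyper T hT)) ∧
      (TopMix (hyper T hT) ↔ MixOn dinf (zadeh T) (Feq X lam)) := by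
  have h := mixing_iff_hyper_iff_zadeh_general T hT lam hlam
  exact ⟨h.out 0 1, h.out 1 2⟩
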